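/- Let I be an ideal of R = ℂ[x₁,…,xₙ] and let ≻ be a graded monomial order on ℕⁿ, with lead monomials in IR₀ taken ≻-minimal and initial terms in D₀ taken ≻-maximal as in the graded local order convention. Then the initial dual space equals the dual space of the initial ideal: the linear span of the initial terms of nonzero elements of D₀[I] equals D₀[in_≥(IR₀) ∩ R], where in_≥(IR₀) is the monomial ideal generated by the lead monomials of nonzero elements of the contraction IR₀ ∩ R. -/

import Mathlib

open MvPolynomial

noncomputable section

/-- The polynomial ring `R = ℂ[x₁,…,xₙ]`. -/
abbrev Rn (n : ℕ) := MvPolynomial (Fin n) ℂ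

/-- Total degree of a monomial exponent vector. -/
def mdeg {n : ℕ} (m : Fin n →₀ ℕ) : ℕ := m.sum fun _ e => e

/-- The truncated dual space `D₀^d`: linear functionals on `R` vanishing on all
monomials of degree greater than `d` (identified with `(R_d)*`). -/
def DualTrunc (n d : ℕ) : Submodule ℂ (Module.Dual ℂ (Rn n)) where
  carrier := {p | ∀ m : Fin n →₀ ℕ, d < mdeg m → p (monomial m 1) = 0}
  add_mem' := by
    intro p q hp hq m hm
    simp [hp m hm, hq m hm]
  zero_mem' := by
    intro m hm
    simp
  smul_mem' := by
    intro c p hp m hm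
    simp [hp m hm]

/-- The Macaulay dual space `D₀` at the origin: linear functionals on `R` vanishing
on all monomials of sufficiently large degree, i.e. `⋃ d, D₀^d`. -/
def MacaulayDual (n : ℕ) : Submodule ℂ (Module.Dual ℂ (Rn n)) where
  carrier := {p | ∃ d : ℕ, ∀ m : Fin n →₀ ℕ, d < mdeg m → p (monomial m 1) = 0}
  add_mem' := by
    rintro p q ⟨d₁, hp⟩ ⟨d₂, hq⟩
    refine ⟨max d₁ d₂, fun m hm => ?_⟩
    simp [hp m (lt_of_le_of_lt (le_max_left _ _) hm),
          hq m (lt_of_le_of_lt (le_max_right _ _) hm)]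
  zero_mem' := ⟨0, fun m _ => rfl⟩
  smul_mem' := by
    rintro c p ⟨d, hp⟩
    exact ⟨d, fun m hm => by simp [hp m hm]⟩

/-- The space of linear functionals annihilating an ideal `I`. -/
def annIdeal {n : ℕ} (I : Ideal (Rn n)) : Submodule ℂ (Module.Dual ℂ (Rn n)) where
  carrier := {p | ∀ f ∈ I, p f = 0}
  add_mem' := by
    intro p q hp hq f hf
    simp [hp f hf, hq f hf]
  zero_mem' := by intro f _; rfl
  smul_mem' := by
    intro c p hp f hf
    simp [hp f hf]

/-- The Macaulay dual space `D₀[I] = {p ∈ D₀ : p(f) = 0 for all f ∈ I}`. -/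
def dualOf {n : ℕ} (I : Ideal (Rn n)) : Submodule ℂ (Module.Dual ℂ (Rn n)) :=
  MacaulayDual n ⊓ annIdeal I

/-- The truncated dual space `D₀^d[I] = D₀[I] ∩ D₀^d`. -/
def truncDualOf {n : ℕ} (I : Ideal (Rn n)) (d : ℕ) : Submodule ℂ (Module.Dual ℂ (Rn n)) :=
  DualTrunc n d ⊓ annIdeal I

/-- The contraction `IR₀ ∩ R` of the extension of `I` to the localization at the
origin: `{g ∈ R : ∃ h ∈ R with h(0) ≠ 0 and h·g ∈ I}`. -/
def contraction {n : ℕ} (I : Ideal (Rn n)) : Set (Rn n) :=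
  {g | ∃ h : Rn n, eval (0 : Fin n → ℂ) h ≠ 0 ∧ h * g ∈ I}

/-- The maximal ideal `m = ⟨x₁,…,xₙ⟩` at the origin, as the kernel of evaluation at `0`. -/
def mIdeal (n : ℕ) : Ideal (Rn n) := RingHom.ker (eval (0 : Fin n → ℂ))

instance (n : ℕ) : (mIdeal n).IsPrime := RingHom.ker_isPrime _

/-- The localization `R₀` of `R` at the maximal ideal of the origin. -/
abbrev Loc (n : ℕ) := Localization.AtPrime (mIdeal n)

/-- The extension `JR₀` of an ideal `J ⊆ R` to the localization `R₀`. -/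
def extIdeal {n : ℕ} (J : Ideal (Rn n)) : Ideal (Loc n) :=
  J.map (algebraMap (Rn n) (Loc n))

/-- Differentiation `σ_f : D₀ → D₀` by `f ∈ R`, `(σ_f p)(g) = p (f * g)`. -/
def sigma {n : ℕ} (f : Rn n) : Module.Dual ℂ (Rn n) →ₗ[ℂ] Module.Dual ℂ (Rn n) :=
  (LinearMap.mulLeft ℂ f).dualMap

/-- A graded monomial order on exponent vectors in `ℕⁿ`: a strict total order
compatible with addition and refining total degree. -/
structure IsGradedMonomialOrder {n : ℕ} (lt : (Fin n →₀ ℕ) → (Fin n →₀ ℕ) → Prop) : Prop where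
  irrefl : ∀ a, ¬ lt a a
  trans : ∀ a b c, lt a b → lt b c → lt a c
  total : ∀ a b, a ≠ b → lt a b ∨ lt b a
  add_compat : ∀ a b c, lt a b → lt (a + c) (b + c)
  deg_compat : ∀ a b, mdeg a < mdeg b → lt a b

/-- `β` is the lead monomial of `g` for the graded local order associated to `lt`:
the `lt`-minimal monomial of `g` with nonzero coefficient. -/
def IsLeadMonomial {n : ℕ} (lt : (Fin n →₀ ℕ) → (Fin n →₀ ℕ) → Prop)
    (g : Rn n) (β : Fin n →₀ ℕ) : Prop :=
  coeff β g ≠ 0 ∧ ∀ γ : Fin n →₀ ℕ, coeff γ g ≠ 0 → γ ≠ β → lt β γ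

/-- The initial ideal `in_≥(IR₀) ∩ R`: the monomial ideal of `R` generated by the
lead monomials of nonzero elements of the contraction `IR₀ ∩ R`. -/
def initialIdeal {n : ℕ} (lt : (Fin n →₀ ℕ) → (Fin n →₀ ℕ) → Prop)
    (I : Ideal (Rn n)) : Ideal (Rn n) :=
  Ideal.span {q | ∃ g ∈ contraction I, g ≠ 0 ∧
    ∃ β : Fin n →₀ ℕ, IsLeadMonomial lt g β ∧ q = monomial β 1}

/-- `∂^α` is (up to the scalar `p(x^α)`) the initial term of the dual functional `p`:
`α` is the `lt`-maximal monomial with nonzero coefficient in `p`. -/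
def IsInitialOf {n : ℕ} (lt : (Fin n →₀ ℕ) → (Fin n →₀ ℕ) → Prop)
    (p : Module.Dual ℂ (Rn n)) (α : Fin n →₀ ℕ) : Prop :=
  p (monomial α 1) ≠ 0 ∧ ∀ β : Fin n →₀ ℕ, p (monomial β 1) ≠ 0 → β ≠ α → lt β α

/-!
Write `J = IR₀ ∩ R` and let `m` be the ideal of the origin.

A functional in `D₀` kills some power `m ^ k`, and a polynomial `h` with `h(0) ≠ 0` is invertible
modulo `m ^ k`. Hence `h * g ∈ I` gives `g ∈ I + m ^ k`, and so `D₀[I] = D₀[J]`.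

The initial terms of `D₀[J]` are, up to scalars, the `∂^α` such that `x^α` is not a lead monomial of
`J`. If `x^α` were the lead monomial of `g ∈ J` and `∂^α` the initial term of `p ∈ D₀[J]`, then all
other terms of `p` and `g` pair to zero, and `p g` would be nonzero. Conversely, if `x^α` is not a
lead monomial of `J`, it lies outside the sum of `J` and the span of the `x^β` with `β ≻ α`. A
functional that kills this sum but not `x^α` has `∂^α` as its initial term, and it lies in `D₀`
because only finitely many exponents precede `α`.

As the lead monomials of `J` are closed under multiplication by monomials, the remaining `∂^α` span
the dual space of the ideal that they generate.
-/

section CommSemiring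

variable {σ R : Type*} [CommSemiring R]

/-- `a` is the least element of `s` for the strict relation `r`. Lead monomials are least exponents
for the monomial order, initial terms are least exponents for the swapped order. -/
def IsLeastBy {α : Type*} (r : α → α → Prop) (s : Set α) (a : α) : Prop :=
  a ∈ s ∧ ∀ b ∈ s, b ≠ a → r a b

/-- The exponents `α` for which the monomial functional `∂^α` occurs in `p`. -/
def dualSupport (p : Module.Dual R (MvPolynomial σ R)) : Set (σ →₀ ℕ) :=
  {α | p (monomial α 1) ≠ 0}

/-- The dual space `D₀[I]` over arbitrary coefficients and variables. Here `D₀` is taken to be the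
span of the monomial functionals `∂^α`, which for finitely many variables are exactly the
functionals vanishing on all monomials of large degree. -/
def macaulayDualOf (I : Ideal (MvPolynomial σ R)) :
    Submodule R (Module.Dual R (MvPolynomial σ R)) :=
  Submodule.span R (Set.range (lcoeff R)) ⊓ (I.restrictScalars R).dualAnnihilator

/-- The exponents of the lead monomials of the elements of `J`. -/
def leadExponents (r : (σ →₀ ℕ) → (σ →₀ ℕ) → Prop) (J : Ideal (MvPolynomial σ R)) :
    Set (σ →₀ ℕ) :=
  {β | ∃ g ∈ J, IsLeastBy r g.support β}

/-- The monomial ideal generated by the lead monomials of the elements of `J`. -/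
def leadMonomialIdeal (r : (σ →₀ ℕ) → (σ →₀ ℕ) → Prop) (J : Ideal (MvPolynomial σ R)) :
    Ideal (MvPolynomial σ R) :=
  Ideal.span ((fun β => monomial β 1) '' leadExponents r J)

/-- The exponents of the initial terms of the functionals in `D`. -/
def initialExponents (r : (σ →₀ ℕ) → (σ →₀ ℕ) → Prop)
    (D : Submodule R (Module.Dual R (MvPolynomial σ R))) : Set (σ →₀ ℕ) :=
  {α | ∃ p ∈ D, IsLeastBy (Function.swap r) (dualSupport p) α}

/-- The initial terms `p(x^α) ∂^α` of the functionals in `D`. -/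
def initialTerms (r : (σ →₀ ℕ) → (σ →₀ ℕ) → Prop)
    (D : Submodule R (Module.Dual R (MvPolynomial σ R))) :
    Set (Module.Dual R (MvPolynomial σ R)) :=
  {q | ∃ p ∈ D, ∃ α, IsLeastBy (Function.swap r) (dualSupport p) α ∧
    q = p (monomial α 1) • lcoeff R α}

lemma dual_apply_eq_sum (p : Module.Dual R (MvPolynomial σ R)) (f : MvPolynomial σ R) :
    p f = ∑ m ∈ f.support, coeff m f * p (monomial m 1) := by
  conv_lhs => rw [f.as_sum, map_sum]
  refine Finset.sum_congr rfl fun m _ => ?_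
  rw [← smul_eq_mul, ← map_smul, smul_monomial, smul_eq_mul, mul_one]

lemma mem_span_image_lcoeff_iff {p : Module.Dual R (MvPolynomial σ R)} {s : Set (σ →₀ ℕ)} :
    p ∈ Submodule.span R (lcoeff R '' s) ↔ (dualSupport p).Finite ∧ dualSupport p ⊆ s := by
  classical
  constructor
  · intro hp
    induction hp using Submodule.span_induction with
    | mem q hq =>
      obtain ⟨α, hα, rfl⟩ := hq
      have hsub : dualSupport (lcoeff R α) ⊆ {α} := fun β hβ => by
        by_contra hne
        exact hβ (by rw [lcoeff_apply, coeff_monomial, if_neg (Set.mem_singleton_iff.not.1 hne)])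
      exact ⟨(Set.finite_singleton α).subset hsub,
        hsub.trans (Set.singleton_subset_iff.2 hα)⟩
    | zero => simp [dualSupport]
    | add q q' _ _ hq hq' =>
      have hsub : dualSupport (q + q') ⊆ dualSupport q ∪ dualSupport q' :=
        Function.support_add _ _
      exact ⟨(hq.1.union hq'.1).subset hsub, hsub.trans (Set.union_subset hq.2 hq'.2)⟩
    | smul c q _ hq =>
      have hsub : dualSupport (c • q) ⊆ dualSupport q := Function.support_const_smul_subset c _
      exact ⟨hq.1.subset hsub, hsub.trans hq.2⟩
  · rintro ⟨hfin, hsub⟩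
    have hsum : p = ∑ α ∈ hfin.toFinset, p (monomial α 1) • lcoeff R α := by
      refine (basisMonomials σ R).ext fun β => ?_
      simp [coeff_monomial, dualSupport]
    rw [hsum]
    exact Submodule.sum_mem _ fun α hα => Submodule.smul_mem _ _ <|
      Submodule.subset_span ⟨α, hsub (hfin.mem_toFinset.1 hα), rfl⟩

lemma mem_macaulayDualOf_iff {I : Ideal (MvPolynomial σ R)}
    {p : Module.Dual R (MvPolynomial σ R)} :
    p ∈ macaulayDualOf I ↔ (dualSupport p).Finite ∧ ∀ f ∈ I, p f = 0 := by
  rw [macaulayDualOf, Submodule.mem_inf, ← Set.image_univ, mem_span_image_lcoeff_iff,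
    Submodule.mem_dualAnnihilator]
  simp

lemma dual_vanishes_on_span_monomial_image_iff {p : Module.Dual R (MvPolynomial σ R)}
    {s : Set (σ →₀ ℕ)} (hs : IsUpperSet s) :
    (∀ f ∈ Ideal.span ((fun β => monomial β (1 : R)) '' s), p f = 0) ↔ dualSupport p ⊆ sᶜ := by
  constructor
  · exact fun hp α hα hαs => hα (hp _ (Ideal.subset_span ⟨α, hαs, rfl⟩))
  · intro hp f hf
    rw [dual_apply_eq_sum]
    refine Finset.sum_eq_zero fun m hm => ?_
    obtain ⟨β, hβ, hβm⟩ := mem_ideal_span_monomial_image.1 hf m hm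
    have hpm : p (monomial m 1) = 0 := by_contra fun h => hp h (hs hβm hβ)
    rw [hpm, mul_zero]

lemma macaulayDualOf_span_monomial_image {s : Set (σ →₀ ℕ)} (hs : IsUpperSet s) :
    macaulayDualOf (Ideal.span ((fun β => monomial β (1 : R)) '' s)) =
      Submodule.span R (lcoeff R '' sᶜ) := by
  ext p
  rw [mem_macaulayDualOf_iff, dual_vanishes_on_span_monomial_image_iff hs,
    mem_span_image_lcoeff_iff]

lemma IsLeastBy.monomial_mul {r : (σ →₀ ℕ) → (σ →₀ ℕ) → Prop}
    (hadd : ∀ a b c, r a b → r (a + c) (b + c)) {g : MvPolynomial σ R} {β : σ →₀ ℕ}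
    (hβ : IsLeastBy r g.support β) (γ : σ →₀ ℕ) :
    IsLeastBy r (monomial γ 1 * g).support (β + γ) := by
  classical
  obtain ⟨hβg, hleast⟩ := hβ
  refine ⟨by simpa [add_comm β γ, coeff_monomial_mul] using hβg, fun m hm hne => ?_⟩
  obtain ⟨hγm, hmg⟩ : γ ≤ m ∧ coeff (m - γ) g ≠ 0 := by
    simpa [coeff_monomial_mul'] using hm
  rw [← tsub_add_cancel_of_le hγm] at hne ⊢
  exact hadd _ _ _ (hleast _ (mem_support_iff.2 hmg) (ne_of_apply_ne (· + γ) hne))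

lemma isUpperSet_leadExponents {r : (σ →₀ ℕ) → (σ →₀ ℕ) → Prop}
    (hadd : ∀ a b c, r a b → r (a + c) (b + c)) (J : Ideal (MvPolynomial σ R)) :
    IsUpperSet (leadExponents r J) := by
  rintro β α hβα ⟨g, hg, hβ⟩
  refine ⟨monomial (α - β) 1 * g, J.mul_mem_left _ hg, ?_⟩
  simpa only [add_tsub_cancel_of_le hβα] using hβ.monomial_mul hadd (α - β)

lemma dual_apply_eq_of_isLeastBy {r : (σ →₀ ℕ) → (σ →₀ ℕ) → Prop} [Std.Asymm r]
    {p : Module.Dual R (MvPolynomial σ R)} {g : MvPolynomial σ R} {α : σ →₀ ℕ}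
    (hg : IsLeastBy r g.support α) (hp : IsLeastBy (Function.swap r) (dualSupport p) α) :
    p g = coeff α g * p (monomial α 1) := by
  rw [dual_apply_eq_sum]
  refine Finset.sum_eq_single_of_mem α hg.1 fun m hm hne => ?_
  have hpm : p (monomial m 1) = 0 :=
    by_contra fun h => Std.Asymm.asymm _ _ (hg.2 m hm hne) (hp.2 m h hne)
  rw [hpm, mul_zero]

lemma disjoint_initialExponents_leadExponents [NoZeroDivisors R]
    (r : (σ →₀ ℕ) → (σ →₀ ℕ) → Prop) [Std.Asymm r] (J : Ideal (MvPolynomial σ R)) :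
    Disjoint (initialExponents r (macaulayDualOf J)) (leadExponents r J) := by
  rw [Set.disjoint_left]
  rintro α ⟨p, hp, hpα⟩ ⟨g, hg, hgα⟩
  have hpg : p g = 0 := (mem_macaulayDualOf_iff.1 hp).2 g hg
  rw [dual_apply_eq_of_isLeastBy hgα hpα] at hpg
  exact mul_ne_zero (mem_support_iff.1 hgα.1) hpα.1 hpg

lemma mem_leadExponents_of_monomial_mem_sup [Nontrivial R]
    {r : (σ →₀ ℕ) → (σ →₀ ℕ) → Prop} [Std.Irrefl r] {J : Ideal (MvPolynomial σ R)} {α : σ →₀ ℕ}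
    (hα : monomial α 1 ∈ J.restrictScalars R ⊔ restrictSupport R {β | r α β}) :
    α ∈ leadExponents r J := by
  classical
  obtain ⟨g, hg, v, hv, hgv⟩ := Submodule.mem_sup.1 hα
  have hv' : ∀ γ, coeff γ v ≠ 0 → r α γ := fun γ hγ =>
    (mem_restrictSupport_iff _).1 hv (mem_support_iff.2 hγ)
  have hcoeff : ∀ γ, coeff γ g + coeff γ v = if α = γ then 1 else 0 := fun γ => by
    rw [← coeff_add, hgv, coeff_monomial]
  refine ⟨g, hg, ?_, fun γ hγ hne => hv' γ fun hγv => ?_⟩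
  · have hαv : coeff α v = 0 := by_contra fun h => Std.Irrefl.irrefl α (hv' α h)
    simpa [hαv] using (hcoeff α).trans_ne (by simp)
  · exact mem_support_iff.1 hγ (by simpa [hγv, hne.symm] using hcoeff γ)

lemma mem_sup_pow_of_isCoprime_of_mul_mem {I J : Ideal R} {g h : R}
    (hJ : IsCoprime (Ideal.span {h}) J) (hg : h * g ∈ I) (k : ℕ) : g ∈ I ⊔ J ^ k := by
  obtain ⟨u, hu, v, hv, huv⟩ := Ideal.isCoprime_iff_exists.1 (hJ.pow_right (n := k))
  obtain ⟨a, rfl⟩ := Ideal.mem_span_singleton'.1 hu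
  have hsplit : a * (h * g) + v * g = g := by
    rw [← mul_assoc, ← add_mul, huv, one_mul]
  rw [← hsplit]
  exact Submodule.add_mem_sup (I.mul_mem_left a hg) (Ideal.mul_mem_right g _ hv)

lemma exists_dual_vanishes_on_pow_idealOfVars {p : Module.Dual R (MvPolynomial σ R)}
    (hp : (dualSupport p).Finite) : ∃ k, ∀ f ∈ idealOfVars σ R ^ k, p f = 0 := by
  obtain ⟨d, hd⟩ := (hp.image Finsupp.degree).bddAbove
  refine ⟨d + 1, fun f hf => ?_⟩
  rw [dual_apply_eq_sum]
  refine Finset.sum_eq_zero fun m _ => ?_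
  by_cases hm : m ∈ dualSupport p
  · have hmd : m.degree < d + 1 := Nat.lt_succ_of_le (hd ⟨m, hm, rfl⟩)
    rw [(mem_pow_idealOfVars_iff' _ _).1 hf m hmd, zero_mul]
  · rw [not_not.1 hm, mul_zero]

end CommSemiring

lemma isCoprime_span_singleton_idealOfVars {σ R : Type*} [CommRing R] {h : MvPolynomial σ R}
    (hh : IsUnit (constantCoeff h)) : IsCoprime (Ideal.span {h}) (idealOfVars σ R) := by
  obtain ⟨c, hc⟩ := hh.exists_left_inv
  refine Ideal.isCoprime_iff_exists.2 ⟨C c * h,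
    Ideal.mul_mem_left _ _ (Ideal.mem_span_singleton_self h), 1 - C c * h, ?_, by ring⟩
  rw [← pow_one (idealOfVars σ R), mem_pow_idealOfVars_iff']
  intro m hm
  obtain rfl : m = 0 := m.degree_eq_zero_iff.1 (Nat.lt_one_iff.1 hm)
  rw [← constantCoeff_eq, map_sub, map_one, map_mul, constantCoeff_C, hc, sub_self]

section Field

variable {σ K : Type*} [Field K]

/-- The maximal ideal of the origin, at which the polynomial ring is localized. -/
def originIdeal (σ K : Type*) [Field K] : Ideal (MvPolynomial σ K) :=
  RingHom.ker (constantCoeff : MvPolynomial σ K →+* K)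

instance : (originIdeal σ K).IsPrime := RingHom.ker_isPrime _

/-- The contraction `IR₀ ∩ R` to the polynomial ring `R` of the extension of `I` to the
localization `R₀` at the origin. -/
def localContraction (I : Ideal (MvPolynomial σ K)) : Ideal (MvPolynomial σ K) :=
  (I.map (algebraMap _ (Localization.AtPrime (originIdeal σ K)))).comap (algebraMap _ _)

lemma mem_localContraction_iff {I : Ideal (MvPolynomial σ K)} {g : MvPolynomial σ K} :
    g ∈ localContraction I ↔ ∃ h, constantCoeff h ≠ 0 ∧ h * g ∈ I :=
  IsLocalization.algebraMap_mem_map_algebraMap_iff (originIdeal σ K).primeCompl _ I g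

lemma macaulayDualOf_localContraction (I : Ideal (MvPolynomial σ K)) :
    macaulayDualOf (localContraction I) = macaulayDualOf I := by
  ext p
  simp only [mem_macaulayDualOf_iff]
  refine and_congr_right fun hfin => ⟨fun hp f hf => hp f (Ideal.le_comap_map hf), ?_⟩
  intro hp g hg
  obtain ⟨h, hh, hgI⟩ := mem_localContraction_iff.1 hg
  obtain ⟨k, hk⟩ := exists_dual_vanishes_on_pow_idealOfVars hfin
  have hgk : g ∈ I ⊔ idealOfVars σ K ^ k :=
    mem_sup_pow_of_isCoprime_of_mul_mem (isCoprime_span_singleton_idealOfVars hh.isUnit) hgI k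
  obtain ⟨a, ha, b, hb, rfl⟩ := Submodule.mem_sup.1 hgk
  rw [map_add, hp a ha, hk b hb, add_zero]

lemma span_initialTerms (r : (σ →₀ ℕ) → (σ →₀ ℕ) → Prop)
    (D : Submodule K (Module.Dual K (MvPolynomial σ K))) :
    Submodule.span K (initialTerms r D) = Submodule.span K (lcoeff K '' initialExponents r D) := by
  apply le_antisymm <;> rw [Submodule.span_le]
  · rintro _ ⟨p, hp, α, hα, rfl⟩
    exact Submodule.smul_mem _ _ (Submodule.subset_span ⟨α, ⟨p, hp, hα⟩, rfl⟩)
  · rintro _ ⟨α, ⟨p, hp, hα⟩, rfl⟩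
    exact (Submodule.smul_mem_iff _ hα.1).1 (Submodule.subset_span ⟨p, hp, α, hα, rfl⟩)

lemma mem_initialExponents_of_notMem_leadExponents {r : (σ →₀ ℕ) → (σ →₀ ℕ) → Prop}
    [Std.Irrefl r] [Std.Trichotomous r] (hfin : ∀ a, {b | r b a}.Finite)
    {J : Ideal (MvPolynomial σ K)} {α : σ →₀ ℕ} (hα : α ∉ leadExponents r J) :
    α ∈ initialExponents r (macaulayDualOf J) := by
  have hnotMem : monomial α 1 ∉ J.restrictScalars K ⊔ restrictSupport K {β | r α β} :=
    mt mem_leadExponents_of_monomial_mem_sup hα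
  obtain ⟨p, hpα, hp⟩ := Submodule.exists_le_ker_of_notMem hnotMem
  have hgt : ∀ β, r α β → p (monomial β 1) = 0 := fun β hβ =>
    hp (Submodule.mem_sup_right ((monomial_mem_restrictSupport K).2 (.inl hβ)))
  have hlt : ∀ β ∈ dualSupport p, β ≠ α → r β α := fun β hβ hne =>
    by_contra fun h => hne (Std.Trichotomous.trichotomous β α h (mt (hgt β) hβ))
  have hsub : dualSupport p ⊆ insert α {β | r β α} := fun β hβ =>
    or_iff_not_imp_left.2 (hlt β hβ)
  exact ⟨p, mem_macaulayDualOf_iff.2 ⟨((hfin α).insert α).subset hsub,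
    fun f hf => hp (Submodule.mem_sup_left hf)⟩, hpα, hlt⟩

lemma initialExponents_macaulayDualOf {r : (σ →₀ ℕ) → (σ →₀ ℕ) → Prop} [IsStrictTotalOrder _ r]
    (hfin : ∀ a, {b | r b a}.Finite) (J : Ideal (MvPolynomial σ K)) :
    initialExponents r (macaulayDualOf J) = (leadExponents r J)ᶜ :=
  (disjoint_initialExponents_leadExponents r J).subset_compl_right.antisymm
    fun _ hα => mem_initialExponents_of_notMem_leadExponents hfin hα

theorem initial_dual_eq_dual_of_initial_ideal_general (I : Ideal (MvPolynomial σ K))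
    (r : (σ →₀ ℕ) → (σ →₀ ℕ) → Prop) [IsStrictTotalOrder _ r]
    (hadd : ∀ a b c, r a b → r (a + c) (b + c)) (hfin : ∀ a, {b | r b a}.Finite) :
    Submodule.span K (initialTerms r (macaulayDualOf I)) =
      macaulayDualOf (leadMonomialIdeal r (localContraction I)) := by
  rw [span_initialTerms, ← macaulayDualOf_localContraction, initialExponents_macaulayDualOf hfin,
    leadMonomialIdeal, macaulayDualOf_span_monomial_image (isUpperSet_leadExponents hadd _)]

end Field

section ComplexPolynomials

variable {n : ℕ}

lemma mem_macaulayDual_iff_finite_dualSupport {p : Module.Dual ℂ (Rn n)} :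
    p ∈ MacaulayDual n ↔ (dualSupport p).Finite := by
  constructor
  · rintro ⟨d, hd⟩
    exact (Finsupp.finite_of_degree_le d).subset fun m hm => not_lt.1 (mt (hd m) hm)
  · intro hp
    obtain ⟨d, hd⟩ := (hp.image Finsupp.degree).bddAbove
    exact ⟨d, fun m hm => by_contra fun h => hm.not_ge (hd ⟨m, h, rfl⟩)⟩

lemma dualOf_eq_macaulayDualOf (I : Ideal (Rn n)) : dualOf I = macaulayDualOf I := by
  ext p
  rw [mem_macaulayDualOf_iff, ← mem_macaulayDual_iff_finite_dualSupport]
  rfl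

lemma isLeadMonomial_iff {lt : (Fin n →₀ ℕ) → (Fin n →₀ ℕ) → Prop} {g : Rn n}
    {β : Fin n →₀ ℕ} : IsLeadMonomial lt g β ↔ IsLeastBy lt g.support β := by
  simp [IsLeadMonomial, IsLeastBy]

lemma initialIdeal_eq_leadMonomialIdeal (lt : (Fin n →₀ ℕ) → (Fin n →₀ ℕ) → Prop)
    (I : Ideal (Rn n)) : initialIdeal lt I = leadMonomialIdeal lt (localContraction I) := by
  simp only [initialIdeal, leadMonomialIdeal, isLeadMonomial_iff]
  congr 1
  ext q
  constructor
  · rintro ⟨g, hg, -, β, hβ, rfl⟩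
    exact ⟨β, ⟨g, mem_localContraction_iff.2 (by simpa [contraction] using hg), hβ⟩, rfl⟩
  · rintro ⟨β, ⟨g, hg, hβ⟩, rfl⟩
    refine ⟨g, ?_, ?_, β, hβ, rfl⟩
    · simpa [contraction] using mem_localContraction_iff.1 hg
    · rintro rfl
      simpa using hβ.1

lemma setOf_initial_terms_eq_initialTerms (lt : (Fin n →₀ ℕ) → (Fin n →₀ ℕ) → Prop)
    (D : Submodule ℂ (Module.Dual ℂ (Rn n))) :
    {q : Module.Dual ℂ (Rn n) | ∃ p ∈ D, p ≠ 0 ∧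
      ∃ α : Fin n →₀ ℕ, IsInitialOf lt p α ∧ q = p (monomial α 1) • (lcoeff ℂ α)} =
      initialTerms lt D := by
  ext q
  refine exists_congr fun p => and_congr_right fun _ => and_iff_right_of_imp ?_
  rintro ⟨α, hα, -⟩ rfl
  exact hα.1 rfl

lemma IsGradedMonomialOrder.isStrictTotalOrder {lt : (Fin n →₀ ℕ) → (Fin n →₀ ℕ) → Prop}
    (hlt : IsGradedMonomialOrder lt) : IsStrictTotalOrder _ lt where
  irrefl := hlt.irrefl
  trans := hlt.trans
  trichotomous a b hab hba := by_contra fun hne => (hlt.total a b hne).elim hab hba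

lemma IsGradedMonomialOrder.finite_setOf_lt {lt : (Fin n →₀ ℕ) → (Fin n →₀ ℕ) → Prop}
    (hlt : IsGradedMonomialOrder lt) (a : Fin n →₀ ℕ) : {b | lt b a}.Finite := by
  refine (Finsupp.finite_of_degree_le (mdeg a)).subset fun b hb => ?_
  refine le_of_not_gt (α := ℕ) fun hab => ?_
  exact hlt.irrefl a (hlt.trans _ _ _ (hlt.deg_compat a b hab) hb)

end ComplexPolynomials

/-- the span of the initial terms of nonzero elements of `D₀[I]`
equals `D₀[in_≥(IR₀) ∩ R]`. The initial term of `p` with `lt`-maximal nonzero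
monomial `α` is the functional `p(x^α) • ∂^α`. -/
theorem initial_dual_eq_dual_of_initial_ideal (n : ℕ) (I : Ideal (Rn n))
    (lt : (Fin n →₀ ℕ) → (Fin n →₀ ℕ) → Prop) (hlt : IsGradedMonomialOrder lt) :
    Submodule.span ℂ {q : Module.Dual ℂ (Rn n) | ∃ p ∈ dualOf I, p ≠ 0 ∧
        ∃ α : Fin n →₀ ℕ, IsInitialOf lt p α ∧ q = p (monomial α 1) • (lcoeff ℂ α)}
      = dualOf (initialIdeal lt I) := by
  have := hlt.isStrictTotalOrder
  rw [setOf_initial_terms_eq_initialTerms, dualOf_eq_macaulayDualOf, dualOf_eq_macaulayDualOf,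
    initialIdeal_eq_leadMonomialIdeal]
  exact initial_dual_eq_dual_of_initial_ideal_general I lt hlt.add_compat hlt.finite_setOf_lt
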